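/- Assume the energy is κ-uniformly convex (no smallness assumption on |ℓ|_Lip). Then there exists C > 0, independent of τ, such that the interpolants z̃_τ of the local incremental minimization scheme, built on the iterates at which the time update proceeds, satisfy ‖z(t) − z̃_τ(t)‖_Z ≤ C √τ for all t ∈ [0,T], where z ∈ C^{0,1}([0,T];Z) is the unique differential solution of the rate-independent system. -/

import Mathlib

open MeasureTheory
open scoped RealInnerProductSpace NNReal

noncomputable section

namespace RIS

variable {Z V X : Type*}
  [NormedAddCommGroup Z] [InnerProductSpace ℝ Z] [CompleteSpace Z]
  [NormedAddCommGroup V] [InnerProductSpace ℝ V] [CompleteSpace V]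
  [NormedAddCommGroup X] [NormedSpace ℝ X]

/-- The convex subdifferential of `R : V → ℝ` at `u`, as a subset of the dual `V →L[ℝ] ℝ`. -/
def subdiff (R : V → ℝ) (u : V) : Set (V →L[ℝ] ℝ) :=
  {ξ | ∀ v : V, R u + ξ (v - u) ≤ R v}

/-- The semilinear energy `I(t,z) = ½⟨Az,z⟩ + F(z) − ⟨ℓ(t), z⟩`. -/
def energy (A : Z →L[ℝ] Z →L[ℝ] ℝ) (F : Z → ℝ) (ℓ : ℝ → V →L[ℝ] ℝ)
    (ι : Z →L[ℝ] V) (t : ℝ) (z : Z) : ℝ :=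
  (1 / 2 : ℝ) * A z z + F z - ℓ t (ι z)

/-- `D_z I(t,z) = Az + D_zF(z) − ℓ(t)`, as an element of `Z*` (here `D_zF(z)` and `ℓ(t)`
are elements of `V*`, composed with the embedding `ι : Z ↪ V`). -/
def DI (A : Z →L[ℝ] Z →L[ℝ] ℝ) (DF : Z → V →L[ℝ] ℝ) (ℓ : ℝ → V →L[ℝ] ℝ)
    (ι : Z →L[ℝ] V) (t : ℝ) (z : Z) : Z →L[ℝ] ℝ :=
  A z + (DF z).comp ι - (ℓ t).comp ι

/-- Local stability: `0 ∈ ∂R(0) + D_z I(t,z)`. -/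
def LocStable (R : V → ℝ) (A : Z →L[ℝ] Z →L[ℝ] ℝ) (DF : Z → V →L[ℝ] ℝ)
    (ℓ : ℝ → V →L[ℝ] ℝ) (ι : Z →L[ℝ] V) (t : ℝ) (z : Z) : Prop :=
  ∃ ξ ∈ subdiff R 0, ξ.comp ι + DI A DF ℓ ι t z = 0

/-- The local incremental minimization scheme with step size `τ`:
`z_{k+1}` minimizes `I(t_k, ·) + R(· − z_k)` over the ball `‖· − z_k‖_V ≤ τ`
and `t_{k+1} = min{t_k + τ − ‖z_{k+1} − z_k‖_V, T}`, starting from `t_0 = 0`, `z_0 = z₀`. -/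
def Scheme (A : Z →L[ℝ] Z →L[ℝ] ℝ) (F : Z → ℝ) (R : V → ℝ) (ℓ : ℝ → V →L[ℝ] ℝ)
    (ι : Z →L[ℝ] V) (T τ : ℝ) (z₀ : Z) (t : ℕ → ℝ) (z : ℕ → Z) : Prop :=
  t 0 = 0 ∧ z 0 = z₀ ∧
    ∀ k : ℕ,
      ‖ι (z (k + 1) - z k)‖ ≤ τ ∧
      (∀ w : Z, ‖ι (w - z k)‖ ≤ τ →
        energy A F ℓ ι (t k) (z (k + 1)) + R (ι (z (k + 1) - z k)) ≤
          energy A F ℓ ι (t k) w + R (ι (w - z k))) ∧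
      t (k + 1) = min (t k + τ - ‖ι (z (k + 1) - z k)‖) T

/-- Standing assumptions on the data of the rate-independent system. -/
def StandingAssumptions (ι : Z →L[ℝ] V) (ιX : V →L[ℝ] X)
    (A : Z →L[ℝ] Z →L[ℝ] ℝ) (α : ℝ) (F : Z → ℝ) (DF : Z → V →L[ℝ] ℝ)
    (D2F : Z → Z →L[ℝ] V →L[ℝ] ℝ) (R : V → ℝ) (ℓ : ℝ → V →L[ℝ] ℝ)
    (L T : ℝ) : Prop :=
  Function.Injective (ι : Z → V) ∧ DenseRange (ι : Z → V) ∧ (∀ w : Z, ‖ι w‖ ≤ ‖w‖) ∧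
  Function.Injective (ιX : V → X) ∧
  (∀ z w : Z, A z w = A w z) ∧ 0 < α ∧ (∀ w : Z, α * ‖w‖ ^ 2 ≤ A w w) ∧
  (∀ w : Z, 0 ≤ F w) ∧
  (∀ w : Z, HasFDerivAt F ((DF w).comp ι) w) ∧
  (∀ w : Z, HasFDerivAt DF (D2F w) w) ∧
  (∃ CF q : ℝ, 0 < CF ∧ 1 ≤ q ∧ ∀ w v : Z, ‖D2F w v‖ ≤ CF * (1 + ‖w‖ ^ q) * ‖v‖) ∧
  0 ≤ L ∧ LipschitzOnWith (Real.toNNReal L) ℓ (Set.Icc 0 T) ∧ 0 < T ∧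
  ConvexOn ℝ Set.univ R ∧ LowerSemicontinuous R ∧ (∀ v : V, 0 ≤ R v) ∧
  (∀ (c : ℝ) (v : V), 0 ≤ c → R (c • v) = c * R v) ∧
  (∃ ρ₁ ρ₂ : ℝ, 0 < ρ₁ ∧ 0 < ρ₂ ∧ ∀ v : V, ρ₁ * ‖ιX v‖ ≤ R v ∧ R v ≤ ρ₂ * ‖v‖)

/-- `κ`-uniform convexity of the energy: `⟨D²_zI(t,z)v,v⟩ ≥ κ‖v‖²_Z`, where
`D²_zI(t,z)[v,v] = ⟨Av,v⟩ + ⟨D²F(z)v, v⟩`. -/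
def UniformlyConvex (A : Z →L[ℝ] Z →L[ℝ] ℝ) (D2F : Z → Z →L[ℝ] V →L[ℝ] ℝ)
    (ι : Z →L[ℝ] V) (κ : ℝ) : Prop :=
  0 < κ ∧ ∀ w v : Z, κ * ‖v‖ ^ 2 ≤ A v v + D2F w v (ι v)

/-- A differential solution of the rate-independent system: `y ∈ W^{1,1}(0,T;Z)`,
`y(0) = z₀` and `0 ∈ ∂R(y'(t)) + D_zI(t, y(t))` for a.e. `t ∈ (0,T)`. -/
def IsDiffSol (A : Z →L[ℝ] Z →L[ℝ] ℝ) (DF : Z → V →L[ℝ] ℝ) (ℓ : ℝ → V →L[ℝ] ℝ)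
    (R : V → ℝ) (ι : Z →L[ℝ] V) (T : ℝ) (z₀ : Z) (y : ℝ → Z) : Prop :=
  y 0 = z₀ ∧
  ∃ y' : ℝ → Z,
    IntervalIntegrable y' volume 0 T ∧
    (∀ s ∈ Set.Icc (0 : ℝ) T, y s = z₀ + ∫ r in (0 : ℝ)..s, y' r) ∧
    (∀ᵐ s ∂(volume.restrict (Set.Ioo (0 : ℝ) T)),
      ∃ ξ ∈ subdiff R (ι (y' s)), ξ.comp ι + DI A DF ℓ ι s (y s) = 0)


/-!
The energy splits as `I(t,z) = E(z) - f(t)(z)`, and the discrete and the exact solution are compared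
through the Bregman distance of `E` from the solution `y` to an interpolant `z`. Differentiating it
along the two curves gives, because the Hessian of `E` is symmetric, the term
`(dE z - dE y)(z' - y')` plus a Taylor remainder of `dE` that is at most a multiple of
`‖z - y‖² ‖y'‖`, hence of the Bregman distance itself. The first term is `O(τ)` by monotonicity of
the subdifferential of the dissipation, because `z` solves the differential inclusion up to an error
`O(τ)`: a minimizer reached at a step where the time proceeds lies in the interior of the `V`-ball
and is therefore stable, so uniform convexity makes these iterates Lipschitz in time. Grönwall's
inequality then bounds the Bregman distance by `O(τ)`, and uniform convexity turns this into the
`O(√τ)` bound on the norm.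
-/

section Calculus

open Set

variable {W G : Type*} [NormedAddCommGroup W] [NormedSpace ℝ W]
  [NormedAddCommGroup G] [NormedSpace ℝ G]

theorem norm_sub_sub_le_of_lipschitzOnWith_fderiv {f : W → G} {f' : W → W →L[ℝ] G}
    (hf : ∀ x, HasFDerivAt f (f' x) x) {S : Set W} (hS : Convex ℝ S) {K : ℝ≥0}
    (hK : LipschitzOnWith K f' S) {x y : W} (hx : x ∈ S) (hy : y ∈ S) :
    ‖f y - f x - f' x (y - x)‖ ≤ K * ‖y - x‖ ^ 2 := by
  have hbound : ∀ u ∈ segment ℝ x y, ‖f' u - f' x‖ ≤ K * ‖y - x‖ := fun u hu ↦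
    (hK.norm_sub_le (hS.segment_subset hx hy hu) hx).trans <| by
      gcongr; exact norm_sub_le_of_mem_segment hu
  calc ‖f y - f x - f' x (y - x)‖ ≤ K * ‖y - x‖ * ‖y - x‖ :=
        Convex.norm_image_sub_le_of_norm_hasFDerivWithin_le'
          (fun u _ ↦ (hf u).hasFDerivWithinAt) hbound (convex_segment x y)
          (left_mem_segment ℝ x y) (right_mem_segment ℝ x y)
    _ = K * ‖y - x‖ ^ 2 := by ring

theorem half_le_sub_sub_of_le_deriv2 {φ φ' φ'' : ℝ → ℝ} {m : ℝ}
    (hφ : ∀ θ, HasDerivAt φ (φ' θ) θ) (hφ' : ∀ θ, HasDerivAt φ' (φ'' θ) θ)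
    (hm : ∀ θ, m ≤ φ'' θ) : m / 2 ≤ φ 1 - φ 0 - φ' 0 := by
  set g : ℝ → ℝ := fun θ ↦ φ θ - m / 2 * θ ^ 2
  have hg : ∀ θ, HasDerivAt g (φ' θ - m * θ) θ := fun θ ↦
    ((hφ θ).sub (((hasDerivAt_id θ).pow 2).const_mul (m / 2))).congr_deriv <| by
      simp only [Nat.cast_ofNat, id_eq, Nat.add_one_sub_one, pow_one, mul_one]
      ring
  have hg' : ∀ θ, HasDerivAt (fun θ ↦ φ' θ - m * θ) (φ'' θ - m) θ := fun θ ↦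
    ((hφ' θ).sub ((hasDerivAt_id θ).const_mul m)).congr_deriv (by simp)
  have hderiv : deriv g = fun θ ↦ φ' θ - m * θ := funext fun θ ↦ (hg θ).deriv
  have hconvex : ConvexOn ℝ univ g := by
    refine convexOn_univ_of_deriv2_nonneg (fun θ ↦ (hg θ).differentiableAt) ?_ fun θ ↦ ?_
    · exact hderiv ▸ fun θ ↦ (hg' θ).differentiableAt
    · simpa [hderiv, (hg' θ).deriv] using hm θ
  have htangent := hconvex.le_slope_of_hasDerivAt (mem_univ 0) (mem_univ 1) one_pos (hg 0)
  simp only [slope_def_field, g] at htangent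
  linarith

theorem norm_le_two_mul_of_abs_apply_self_le {B : W →L[ℝ] W →L[ℝ] ℝ}
    (hsymm : ∀ v w, B v w = B w v) {c : ℝ} (hc : 0 ≤ c) (hB : ∀ v, |B v v| ≤ c * ‖v‖ ^ 2) :
    ‖B‖ ≤ 2 * c := by
  refine B.opNorm_le_of_unit_norm (by positivity) fun v hv ↦
    (B v).opNorm_le_of_unit_norm (by positivity) fun w hw ↦ ?_
  have hpolar : 4 * B v w = B (v + w) (v + w) - B (v - w) (v - w) := by
    simp only [map_add, map_sub, _root_.add_apply, _root_.sub_apply, hsymm w v]; ring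
  have hdiag : ∀ u, ‖u‖ ≤ 2 → |B u u| ≤ c * 2 ^ 2 := fun u hu ↦ (hB u).trans (by gcongr)
  have hadd := abs_le.1 (hdiag (v + w) ((norm_add_le v w).trans (by linarith)))
  have hsub := abs_le.1 (hdiag (v - w) ((norm_sub_le v w).trans (by linarith)))
  rw [Real.norm_eq_abs, abs_le]
  constructor <;> linarith

theorem lipschitzOnWith_of_apply_self_sub_le {B : W → W →L[ℝ] W →L[ℝ] ℝ}
    (hsymm : ∀ z v w, B z v w = B z w v) {S : Set W} {C : ℝ≥0}
    (hB : ∀ z₁ ∈ S, ∀ z₂ ∈ S, ∀ v, B z₁ v v - B z₂ v v ≤ C * ‖z₁ - z₂‖ * ‖v‖ ^ 2) :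
    LipschitzOnWith (2 * C) B S := by
  refine LipschitzOnWith.of_dist_le_mul fun z₁ hz₁ z₂ hz₂ ↦ ?_
  rw [dist_eq_norm, dist_eq_norm, NNReal.coe_mul, NNReal.coe_ofNat, mul_assoc]
  refine norm_le_two_mul_of_abs_apply_self_le (fun v w ↦ ?_) (by positivity) fun v ↦ ?_
  · simp only [_root_.sub_apply, hsymm _ v w]
  · have h := hB z₂ hz₂ z₁ hz₁ v
    rw [norm_sub_rev] at h
    exact abs_le.2 ⟨by simp only [_root_.sub_apply]; linarith, hB z₁ hz₁ z₂ hz₂ v⟩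

theorem hasFDerivAt_half_mul_apply_self {A : W →L[ℝ] W →L[ℝ] ℝ} (hA : ∀ v w, A v w = A w v)
    (w : W) : HasFDerivAt (fun w ↦ (1 / 2 : ℝ) * A w w) (A w) w := by
  refine ((A.hasFDerivAt.clm_apply (hasFDerivAt_id w)).const_mul (1 / 2 : ℝ)).congr_fderiv ?_
  ext v
  simp only [ContinuousLinearMap.comp_id, id_eq, _root_.smul_apply, _root_.add_apply, smul_eq_mul,
    ContinuousLinearMap.flip_apply, hA v w]
  ring

theorem absolutelyContinuousOnInterval_comp {g : W → G} (hg : ContDiff ℝ 1 g) {u : ℝ → W}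
    {a b : ℝ} {K : ℝ≥0} (hu : LipschitzOnWith K u (uIcc a b)) :
    AbsolutelyContinuousOnInterval (fun s ↦ g (u s)) a b := by
  have hcompact : IsCompact (u '' uIcc a b) := isCompact_uIcc.image_of_continuousOn hu.continuousOn
  obtain ⟨K', hK'⟩ :=
    hg.locallyLipschitz.locallyLipschitzOn.exists_lipschitzOnWith_of_compact hcompact
  exact (hK'.comp hu (mapsTo_image u _)).absolutelyContinuousOnInterval

theorem le_exp_mul_of_ae_deriv_le {f : ℝ → ℝ} {a b c η : ℝ} (hab : a ≤ b) (hc : 0 ≤ c)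
    (hη : 0 ≤ η) (hf : AbsolutelyContinuousOnInterval f a b)
    (hd : ∀ᵐ x, x ∈ Ioo a b → deriv f x ≤ c * f x + η) :
    f b ≤ Real.exp (c * (b - a)) * (f a + η * (b - a)) := by
  set g : ℝ → ℝ := fun x ↦ Real.exp (-(c * (x - a))) * f x with hg
  have hgAC : AbsolutelyContinuousOnInterval g a b :=
    (ContDiffOn.absolutelyContinuousOnInterval (by fun_prop)).mul hf
  have hderiv_le : ∀ᵐ x, x ∈ Ioo a b → deriv g x ≤ η := by
    filter_upwards [hd, hf.ae_differentiableAt] with x hdx hdiff hx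
    have hexp : HasDerivAt (fun x ↦ Real.exp (-(c * (x - a))))
        (Real.exp (-(c * (x - a))) * -c) x := by
      simpa using (((hasDerivAt_id x).sub_const a).const_mul c).neg.exp
    have hfx := (hdiff (Ioo_subset_Icc_self.trans Icc_subset_uIcc hx)).hasDerivAt
    have hgx : HasDerivAt g _ x := hexp.mul hfx
    calc deriv g x
        = Real.exp (-(c * (x - a))) * (deriv f x - c * f x) := by rw [hgx.deriv]; ring
      _ ≤ Real.exp (-(c * (x - a))) * η := by gcongr; linarith [hdx hx]
      _ ≤ η := mul_le_of_le_one_left hη <| Real.exp_le_one_iff.2 <|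
          neg_nonpos.2 <| mul_nonneg hc (sub_nonneg.2 hx.1.le)
  have hincr : g b - g a ≤ η * (b - a) := by
    have hae : deriv g ≤ᵐ[volume.restrict (Icc a b)] fun _ ↦ η := by
      rw [Measure.restrict_congr_set Ioo_ae_eq_Icc.symm]
      exact (ae_restrict_iff' measurableSet_Ioo).2 hderiv_le
    calc g b - g a = ∫ x in a..b, deriv g x := hgAC.integral_deriv_eq_sub.symm
      _ ≤ ∫ _ in a..b, η := intervalIntegral.integral_mono_ae_restrict hab
          hgAC.intervalIntegrable_deriv intervalIntegrable_const hae
      _ = η * (b - a) := by rw [intervalIntegral.integral_const, smul_eq_mul, mul_comm]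
  have hgb : f b = Real.exp (c * (b - a)) * g b := by
    simp only [hg, ← mul_assoc, ← Real.exp_add, add_neg_cancel, Real.exp_zero, one_mul]
  have hga : g a = f a := by simp [hg]
  rw [hgb]
  gcongr
  linarith

end Calculus

section Potential

open Set Metric

variable {W : Type*} [NormedAddCommGroup W] [NormedSpace ℝ W]

/-- A `κ`-uniformly convex potential `E` of class `C^{2,1}_loc`, with first derivative `dE` and
Hessian `d2E`: the time-independent part of the energy `I(t,z) = E(z) - f(t)(z)`. -/
structure IsUniformlyConvexPotential (E : W → ℝ) (dE : W → W →L[ℝ] ℝ)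
    (d2E : W → W →L[ℝ] W →L[ℝ] ℝ) (κ : ℝ) : Prop where
  modulus_pos : 0 < κ
  hasFDerivAt : ∀ z, HasFDerivAt E (dE z) z
  hasFDerivAt_deriv : ∀ z, HasFDerivAt dE (d2E z) z
  le_hessian : ∀ z v, κ * ‖v‖ ^ 2 ≤ d2E z v v
  exists_lipschitzOnWith_hessian : ∀ r, ∃ C : ℝ≥0, LipschitzOnWith C d2E (closedBall 0 r)

/-- The Bregman distance of `E` (with derivative `dE`) from `y` to `x`; it serves as the Lyapunov
function comparing two solutions. -/
def bregman (E : W → ℝ) (dE : W → W →L[ℝ] ℝ) (x y : W) : ℝ :=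
  E x - E y - dE y (x - y)

variable {E : W → ℝ} {dE : W → W →L[ℝ] ℝ} {d2E : W → W →L[ℝ] W →L[ℝ] ℝ} {κ : ℝ}

@[simp]
theorem bregman_self (x : W) : bregman E dE x x = 0 := by
  simp [bregman]

namespace IsUniformlyConvexPotential

variable (hE : IsUniformlyConvexPotential E dE d2E κ)
include hE

theorem hessian_symm (z v w : W) : d2E z v w = d2E z w v :=
  second_derivative_symmetric hE.hasFDerivAt (hE.hasFDerivAt_deriv z) v w

theorem continuous_hessian : Continuous d2E := by
  refine continuous_iff_continuousAt.2 fun z ↦ ?_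
  obtain ⟨C, hC⟩ := hE.exists_lipschitzOnWith_hessian (‖z‖ + 1)
  refine hC.continuousOn.continuousAt (Filter.mem_of_superset (ball_mem_nhds z one_pos) ?_)
  exact ball_subset_closedBall.trans (closedBall_subset_closedBall' (by simp [add_comm]))

theorem contDiff_deriv : ContDiff ℝ 1 dE :=
  contDiff_one_iff_hasFDerivAt.2 ⟨d2E, hE.continuous_hessian, hE.hasFDerivAt_deriv⟩

theorem contDiff : ContDiff ℝ 1 E :=
  contDiff_one_iff_hasFDerivAt.2 ⟨dE, hE.contDiff_deriv.continuous, hE.hasFDerivAt⟩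

theorem exists_lipschitzOnWith_deriv (r : ℝ) :
    ∃ M : ℝ≥0, LipschitzOnWith M dE (closedBall 0 r) := by
  rcases lt_or_ge r 0 with hr | hr
  · exact ⟨0, by simp [closedBall_eq_empty.2 hr]⟩
  obtain ⟨C, hC⟩ := hE.exists_lipschitzOnWith_hessian r
  refine ⟨‖d2E 0‖₊ + C * ⟨r, hr⟩,
    (convex_closedBall 0 r).lipschitzOnWith_of_nnnorm_hasFDerivWithin_le
      (fun z _ ↦ (hE.hasFDerivAt_deriv z).hasFDerivWithinAt) fun z hz ↦ ?_⟩
  have hdist : ‖d2E z - d2E 0‖ ≤ C * r := by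
    refine (hC.norm_sub_le hz (mem_closedBall_self hr)).trans ?_
    gcongr
    simpa using hz
  exact (norm_le_norm_add_norm_sub' (d2E z) (d2E 0)).trans (add_le_add_right hdist _)

theorem half_mul_norm_sub_sq_le_bregman (x y : W) : κ / 2 * ‖x - y‖ ^ 2 ≤ bregman E dE x y := by
  have hline : ∀ θ, HasDerivAt (fun θ : ℝ ↦ y + θ • (x - y)) (x - y) θ := fun θ ↦ by
    simpa using ((hasDerivAt_id θ).smul_const (x - y)).const_add y
  have h := half_le_sub_sub_of_le_deriv2
    (fun θ ↦ (hE.hasFDerivAt _).comp_hasDerivAt θ (hline θ))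
    (fun θ ↦ ((hE.hasFDerivAt_deriv _).comp_hasDerivAt θ (hline θ)).clm_apply
      (hasDerivAt_const θ (x - y)))
    (fun θ ↦ by simpa using hE.le_hessian (y + θ • (x - y)) (x - y))
  simp only [Function.comp_apply, one_smul, zero_smul, add_zero, add_sub_cancel] at h
  rw [bregman]
  linarith

theorem bregman_nonneg (x y : W) : 0 ≤ bregman E dE x y :=
  (mul_nonneg (half_pos hE.modulus_pos).le (sq_nonneg _)).trans
    (hE.half_mul_norm_sub_sq_le_bregman x y)

theorem norm_sub_sq_le (x y : W) : ‖x - y‖ ^ 2 ≤ 2 / κ * bregman E dE x y := by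
  have hκ := hE.modulus_pos
  have h := hE.half_mul_norm_sub_sq_le_bregman x y
  rw [div_mul_eq_mul_div, le_div_iff₀ hκ]
  linarith

theorem contDiff_bregman : ContDiff ℝ 1 fun q : W × W ↦ bregman E dE q.1 q.2 := by
  have h1 := hE.contDiff
  have h2 := hE.contDiff_deriv
  unfold bregman
  fun_prop

theorem hasDerivAt_bregman {x y : ℝ → W} {x' y' : W} {s : ℝ} (hx : HasDerivAt x x' s)
    (hy : HasDerivAt y y' s) :
    HasDerivAt (fun s ↦ bregman E dE (x s) (y s))
      ((dE (x s) - dE (y s)) x' - d2E (y s) y' (x s - y s)) s := by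
  have hEx := (hE.hasFDerivAt (x s)).comp_hasDerivAt s hx
  have hEy := (hE.hasFDerivAt (y s)).comp_hasDerivAt s hy
  have hdEy := (hE.hasFDerivAt_deriv (y s)).comp_hasDerivAt s hy
  refine ((hEx.sub hEy).sub (hdEy.clm_apply (hx.sub hy))).congr_deriv ?_
  simp only [map_sub, _root_.sub_apply, Pi.sub_apply, Function.comp_apply]
  ring

theorem absolutelyContinuousOnInterval_bregman {x y : ℝ → W} {a b : ℝ} {Kx Ky : ℝ≥0}
    (hx : LipschitzOnWith Kx x (uIcc a b)) (hy : LipschitzOnWith Ky y (uIcc a b)) :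
    AbsolutelyContinuousOnInterval (fun s ↦ bregman E dE (x s) (y s)) a b :=
  absolutelyContinuousOnInterval_comp (u := fun s ↦ (x s, y s)) hE.contDiff_bregman (hx.prodMk hy)

end IsUniformlyConvexPotential

end Potential

section Flow

open Set

variable {W : Type*} [NormedAddCommGroup W] [NormedSpace ℝ W]

/-- Local stability of `z` under the load `g`: in the notation of the paper,
`0 ∈ ∂ρ(0) + dE z - g`. -/
def IsStable (dE : W → W →L[ℝ] ℝ) (ρ : W → ℝ) (g : W →L[ℝ] ℝ) (z : W) : Prop :=
  ∀ v, g v ≤ dE z v + ρ v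

/-- `ξ` is a subgradient at `v` of the `1`-homogeneous functional `ρ`, up to an error `ε` in the
bound `ξ ≤ ρ` and an error `δ` in the identity `ρ v = ξ v`. For `ε = δ = 0` this is `ξ ∈ ∂ρ(v)`. -/
structure IsApproxSubgradient (ρ : W → ℝ) (ξ : W →L[ℝ] ℝ) (v : W) (ε δ : ℝ) : Prop where
  apply_le : ∀ w, ξ w ≤ ρ w + ε * ‖w‖
  le_apply : ρ v ≤ ξ v + δ

theorem IsApproxSubgradient.sub_apply_sub_le {ρ : W → ℝ} {ξ₁ ξ₂ : W →L[ℝ] ℝ} {v₁ v₂ : W}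
    {ε₁ δ₁ ε₂ δ₂ : ℝ} (h₁ : IsApproxSubgradient ρ ξ₁ v₁ ε₁ δ₁)
    (h₂ : IsApproxSubgradient ρ ξ₂ v₂ ε₂ δ₂) :
    (ξ₁ - ξ₂) (v₂ - v₁) ≤ δ₁ + δ₂ + ε₁ * ‖v₂‖ + ε₂ * ‖v₁‖ := by
  simp only [_root_.sub_apply, map_sub]
  linarith [h₁.apply_le v₂, h₂.apply_le v₁, h₁.le_apply, h₂.le_apply]

/-- `y` solves `f(s) - dE (y s) ∈ ∂ρ(y'(s))` for a.e. `s ∈ I`, up to the errors `ε`, `δ` of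
`IsApproxSubgradient`. -/
def IsFlowOn (dE : W → W →L[ℝ] ℝ) (ρ : W → ℝ) (f : ℝ → W →L[ℝ] ℝ) (ε δ : ℝ) (I : Set ℝ)
    (y : ℝ → W) : Prop :=
  ∀ᵐ s, s ∈ I → ∃ v, HasDerivAt y v s ∧ IsApproxSubgradient ρ (f s - dE (y s)) v ε δ

theorem IsFlowOn.mono {dE : W → W →L[ℝ] ℝ} {ρ : W → ℝ} {f : ℝ → W →L[ℝ] ℝ} {ε δ : ℝ}
    {I J : Set ℝ} {y : ℝ → W} (hy : IsFlowOn dE ρ f ε δ J y) (hIJ : I ⊆ J) :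
    IsFlowOn dE ρ f ε δ I y :=
  Filter.Eventually.mono hy fun _ hs hI ↦ hs (hIJ hI)

variable {E : W → ℝ} {dE : W → W →L[ℝ] ℝ} {d2E : W → W →L[ℝ] W →L[ℝ] ℝ} {κ : ℝ} {ρ : W → ℝ}
  {f : ℝ → W →L[ℝ] ℝ}

namespace IsUniformlyConvexPotential

variable (hE : IsUniformlyConvexPotential E dE d2E κ)
include hE

theorem norm_sub_le_of_isStable {p q : W} {g₁ g₂ : W →L[ℝ] ℝ} (hp : IsStable dE ρ g₁ p)
    (hq : E q - g₂ q + ρ (q - p) ≤ E p - g₂ p) : ‖q - p‖ ≤ 2 / κ * ‖g₂ - g₁‖ := by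
  have hκ := hE.modulus_pos
  have hbregman : bregman E dE q p ≤ ‖g₂ - g₁‖ * ‖q - p‖ :=
    calc bregman E dE q p ≤ (g₂ - g₁) (q - p) := by
          have := hp (q - p)
          simp only [bregman, _root_.sub_apply, map_sub] at this ⊢
          linarith
      _ ≤ ‖g₂ - g₁‖ * ‖q - p‖ := (le_abs_self _).trans ((g₂ - g₁).le_opNorm _)
  rcases (norm_nonneg (q - p)).eq_or_lt with h0 | hpos
  · rw [← h0]; positivity
  · refine le_of_mul_le_mul_right ?_ hpos
    calc ‖q - p‖ * ‖q - p‖ = ‖q - p‖ ^ 2 := (sq _).symm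
      _ ≤ 2 / κ * bregman E dE q p := hE.norm_sub_sq_le q p
      _ ≤ 2 / κ * (‖g₂ - g₁‖ * ‖q - p‖) := by gcongr
      _ = 2 / κ * ‖g₂ - g₁‖ * ‖q - p‖ := by ring

theorem deriv_bregman_le {S : Set W} (hS : Convex ℝ S) {C : ℝ≥0} (hC : LipschitzOnWith C d2E S)
    {g : W →L[ℝ] ℝ} {y z y' z' : W} (hyS : y ∈ S) (hzS : z ∈ S) {Λ ε δ : ℝ} (hΛ : ‖y'‖ ≤ Λ)
    (hε : 0 ≤ ε) (hy : IsApproxSubgradient ρ (g - dE y) y' 0 0)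
    (hz : IsApproxSubgradient ρ (g - dE z) z' ε δ) :
    (dE z - dE y) z' - d2E y y' (z - y) ≤
      2 * C * Λ / κ * bregman E dE z y + (δ + ε * Λ) := by
  have hmonotone : (dE z - dE y) (z' - y') ≤ δ + ε * Λ := by
    have h := hy.sub_apply_sub_le hz
    rw [sub_sub_sub_cancel_left] at h
    nlinarith
  have htaylor : (dE z - dE y - d2E y (z - y)) y' ≤ 2 * C * Λ / κ * bregman E dE z y :=
    calc (dE z - dE y - d2E y (z - y)) y' ≤ ‖dE z - dE y - d2E y (z - y)‖ * ‖y'‖ :=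
          (le_abs_self _).trans ((dE z - dE y - d2E y (z - y)).le_opNorm y')
      _ ≤ C * ‖z - y‖ ^ 2 * Λ := by
          gcongr
          exact norm_sub_sub_le_of_lipschitzOnWith_fderiv hE.hasFDerivAt_deriv hS hC hyS hzS
      _ ≤ C * (2 / κ * bregman E dE z y) * Λ := by
          have := (norm_nonneg y').trans hΛ
          gcongr
          exact hE.norm_sub_sq_le z y
      _ = 2 * C * Λ / κ * bregman E dE z y := by ring
  have hsplit : (dE z - dE y) z' - d2E y y' (z - y) =
      (dE z - dE y) (z' - y') + (dE z - dE y - d2E y (z - y)) y' := by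
    rw [hE.hessian_symm y y' (z - y)]
    simp only [map_sub, _root_.sub_apply]
    ring
  linarith

theorem bregman_le_of_isFlowOn {S : Set W} (hS : Convex ℝ S) {C : ℝ≥0}
    (hC : LipschitzOnWith C d2E S) {a b : ℝ} (hab : a ≤ b) {y z : ℝ → W} {Λ K : ℝ≥0}
    (hyLip : LipschitzOnWith Λ y (Icc a b)) (hzLip : LipschitzOnWith K z (Icc a b))
    (hyS : MapsTo y (Icc a b) S) (hzS : MapsTo z (Icc a b) S) {ε δ : ℝ} (hε : 0 ≤ ε) (hδ : 0 ≤ δ)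
    (hy : IsFlowOn dE ρ f 0 0 (Ioo a b) y) (hz : IsFlowOn dE ρ f ε δ (Ioo a b) z) :
    bregman E dE (z b) (y b) ≤ Real.exp (2 * C * Λ / κ * (b - a)) *
      (bregman E dE (z a) (y a) + (δ + ε * Λ) * (b - a)) := by
  have hκ := hE.modulus_pos
  rw [← uIcc_of_le hab] at hyLip hzLip
  refine le_exp_mul_of_ae_deriv_le hab (by positivity) (by positivity)
    (hE.absolutelyContinuousOnInterval_bregman hzLip hyLip) ?_
  rw [uIcc_of_le hab] at hyLip
  filter_upwards [hy, hz] with s hys hzs hs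
  obtain ⟨y', hy', hysub⟩ := hys hs
  obtain ⟨z', hz', hzsub⟩ := hzs hs
  have hsI := Ioo_subset_Icc_self hs
  have hΛ : ‖y'‖ ≤ Λ := hy'.le_of_lipschitzOn (Icc_mem_nhds hs.1 hs.2) hyLip
  rw [(hE.hasDerivAt_bregman hz' hy').deriv]
  exact hE.deriv_bregman_le hS hC (hyS hsI) (hzS hsI) hΛ hε hysub hzsub

end IsUniformlyConvexPotential

end Flow

section Interpolant

open Set

variable {W : Type*} [NormedAddCommGroup W] [NormedSpace ℝ W]

/-- The affine interpolant of the values `p` at time `a` and `q` at time `b`. -/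
def affineInterp (a b : ℝ) (p q : W) (s : ℝ) : W :=
  AffineMap.lineMap p q ((s - a) / (b - a))

theorem affineInterp_apply (a b : ℝ) (p q : W) (s : ℝ) :
    affineInterp a b p q s = p + ((s - a) / (b - a)) • (q - p) := by
  rw [affineInterp, AffineMap.lineMap_apply_module', add_comm]

@[simp]
theorem affineInterp_left (a b : ℝ) (p q : W) : affineInterp a b p q a = p := by
  simp [affineInterp]

theorem affineInterp_right {a b : ℝ} (hab : a ≠ b) (p q : W) : affineInterp a b p q b = q := by
  simp [affineInterp, div_self (sub_ne_zero.2 hab.symm)]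

theorem affineInterp_mem_segment {a b s : ℝ} (hs : s ∈ Icc a b) (p q : W) :
    affineInterp a b p q s ∈ segment ℝ p q :=
  lineMap_mem_segment ℝ p q ⟨div_nonneg (sub_nonneg.2 hs.1) (sub_nonneg.2 (hs.1.trans hs.2)),
    div_le_one_of_le₀ (by linarith [hs.2]) (sub_nonneg.2 (hs.1.trans hs.2))⟩

theorem hasDerivAt_affineInterp (a b : ℝ) (p q : W) (s : ℝ) :
    HasDerivAt (affineInterp a b p q) ((b - a)⁻¹ • (q - p)) s := by
  have h : HasDerivAt (fun s ↦ (s - a) / (b - a)) (b - a)⁻¹ s := by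
    simpa using ((hasDerivAt_id s).sub_const a).div_const (b - a)
  exact AffineMap.hasDerivAt_lineMap.scomp s h

theorem exists_lipschitzWith_affineInterp (a b : ℝ) (p q : W) :
    ∃ K : ℝ≥0, LipschitzWith K (affineInterp a b p q) :=
  ⟨_, lipschitzWith_of_nnnorm_deriv_le
    (fun s ↦ (hasDerivAt_affineInterp a b p q s).differentiableAt)
    fun s ↦ (congrArg nnnorm (hasDerivAt_affineInterp a b p q s).deriv).le⟩

variable {E : W → ℝ} {dE : W → W →L[ℝ] ℝ} {d2E : W → W →L[ℝ] W →L[ℝ] ℝ} {κ : ℝ} {ρ : W → ℝ}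
  {f : ℝ → W →L[ℝ] ℝ}

namespace IsUniformlyConvexPotential

variable (hE : IsUniformlyConvexPotential E dE d2E κ)
include hE

/-- Stability at `q` gives the one-sided bound, the energy decrease from `p` to `q` the identity. -/
theorem isApproxSubgradient_inv_smul_sub (hρ : ∀ (c : ℝ) v, 0 ≤ c → ρ (c • v) = c * ρ v)
    {p q : W} {g ξ : W →L[ℝ] ℝ} (hstable : IsStable dE ρ g q)
    (hdescent : E q - g q + ρ (q - p) ≤ E p - g p) {ε : ℝ} (hp : ‖g - dE p - ξ‖ ≤ ε)
    (hq : ‖g - dE q - ξ‖ ≤ ε) {h σ : ℝ} (hh : 0 < h) (hpq : ‖q - p‖ ≤ σ * h) :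
    IsApproxSubgradient ρ ξ (h⁻¹ • (q - p)) ε (ε * σ) := by
  constructor
  · intro w
    have hstable_w := hstable w
    have hqw := (abs_le.1 ((g - dE q - ξ).le_of_opNorm_le hq w)).1
    simp only [_root_.sub_apply] at hqw
    linarith
  · set v := h⁻¹ • (q - p)
    have hv : ‖v‖ ≤ σ := by
      rw [norm_smul, norm_inv, Real.norm_of_nonneg hh.le, inv_mul_le_iff₀ hh]
      linarith
    have hρv : ρ v ≤ (g - dE p) v := by
      have hconvex := hE.bregman_nonneg q p
      rw [hρ _ _ (by positivity), map_smul, smul_eq_mul]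
      gcongr
      simp only [bregman, _root_.sub_apply, map_sub] at hconvex ⊢
      linarith
    have hpv := (abs_le.1 ((g - dE p - ξ).le_of_opNorm_le hp v)).2
    have hεσ := mul_le_mul_of_nonneg_left hv ((norm_nonneg _).trans hp)
    simp only [_root_.sub_apply] at hpv hρv
    linarith

theorem isFlowOn_affineInterp (hρ : ∀ (c : ℝ) v, 0 ≤ c → ρ (c • v) = c * ρ v) {S : Set W}
    (hS : Convex ℝ S) {M L : ℝ≥0} (hM : LipschitzOnWith M dE S) {a b : ℝ} (hab : a < b)
    (hf : LipschitzOnWith L f (Icc a b)) {p q : W} (hp : p ∈ S) (hq : q ∈ S) {σ : ℝ}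
    (hpq : ‖q - p‖ ≤ σ * (b - a)) (hstable : IsStable dE ρ (f b) q)
    (hdescent : E q - f b q + ρ (q - p) ≤ E p - f b p) :
    IsFlowOn dE ρ f ((M * σ + L) * (b - a)) ((M * σ + L) * (b - a) * σ) (Ioo a b)
      (affineInterp a b p q) := by
  refine Filter.Eventually.of_forall fun s hs ↦ ⟨_, hasDerivAt_affineInterp a b p q s, ?_⟩
  set u := affineInterp a b p q s
  have hu : u ∈ segment ℝ p q := affineInterp_mem_segment (Ioo_subset_Icc_self hs) p q
  have hload : ‖f b - f s‖ ≤ L * (b - a) :=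
    (hf.norm_sub_le (right_mem_Icc.2 hab.le) (Ioo_subset_Icc_self hs)).trans <| by
      rw [Real.norm_of_nonneg (by linarith [hs.2])]
      gcongr
      exact hs.1.le
  have hdefect : ∀ x ∈ S, ‖u - x‖ ≤ ‖q - p‖ →
      ‖f b - dE x - (f s - dE u)‖ ≤ (M * σ + L) * (b - a) := fun x hx hux ↦
    calc ‖f b - dE x - (f s - dE u)‖ = ‖(f b - f s) + (dE u - dE x)‖ := by congr 1; abel
      _ ≤ L * (b - a) + M * (σ * (b - a)) := (norm_add_le _ _).trans <| add_le_add hload <|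
          (hM.norm_sub_le (hS.segment_subset hp hq hu) hx).trans <| by
            gcongr
            exact hux.trans hpq
      _ = (M * σ + L) * (b - a) := by ring
  refine hE.isApproxSubgradient_inv_smul_sub hρ hstable hdescent
    (hdefect p hp (norm_sub_le_of_mem_segment hu)) (hdefect q hq ?_) (sub_pos.2 hab) hpq
  rw [segment_symm] at hu
  exact (norm_sub_le_of_mem_segment hu).trans_eq (norm_sub_rev p q)

end IsUniformlyConvexPotential

end Interpolant

section Chain

open Set Metric

variable {W : Type*} [NormedAddCommGroup W] [NormedSpace ℝ W]

/-- `y` is a Lipschitz solution on `[0,T]` of the rate-independent system with potential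
derivative `dE`, dissipation `ρ` and load `f`, starting from a locally stable state. -/
structure IsLipschitzSolution (dE : W → W →L[ℝ] ℝ) (ρ : W → ℝ) (f : ℝ → W →L[ℝ] ℝ) (T : ℝ)
    (Λ : ℝ≥0) (y : ℝ → W) : Prop where
  lipschitzOnWith : LipschitzOnWith Λ y (Icc 0 T)
  isFlowOn : IsFlowOn dE ρ f 0 0 (Ioo 0 T) y
  isStable_zero : IsStable dE ρ (f 0) (y 0)

/-- What is left of the incremental minimization scheme on the iterates at which the time
proceeds: `ζ (j + 1)` is stable at, and decreases the energy from `ζ j` at, the time `s j`. -/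
structure IsStableChain (E : W → ℝ) (dE : W → W →L[ℝ] ℝ) (ρ : W → ℝ) (f : ℝ → W →L[ℝ] ℝ)
    (T τ : ℝ) (n : ℕ) (s : ℕ → ℝ) (ζ : ℕ → W) : Prop where
  time_zero : s 0 = 0
  time_mem : ∀ j, s j ∈ Icc 0 T
  time_lt : ∀ j, j + 1 < n → s j < s (j + 1)
  time_le : ∀ j < n, s (j + 1) ≤ s j + τ
  isStable : ∀ j < n, IsStable dE ρ (f (s j)) (ζ (j + 1))
  descent : ∀ j < n,
    E (ζ (j + 1)) - f (s j) (ζ (j + 1)) + ρ (ζ (j + 1) - ζ j) ≤ E (ζ j) - f (s j) (ζ j)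

variable {E : W → ℝ} {dE : W → W →L[ℝ] ℝ} {d2E : W → W →L[ℝ] W →L[ℝ] ℝ} {κ : ℝ} {ρ : W → ℝ}
  {f : ℝ → W →L[ℝ] ℝ} {T τ : ℝ} {n : ℕ} {s : ℕ → ℝ} {ζ : ℕ → W} {L Λ : ℝ≥0} {y : ℝ → W}

theorem IsLipschitzSolution.norm_sub_zero_le (hy : IsLipschitzSolution dE ρ f T Λ y) {θ : ℝ}
    (hθ : θ ∈ Icc 0 T) : ‖y θ - y 0‖ ≤ Λ * T := by
  refine (hy.lipschitzOnWith.norm_sub_le hθ (left_mem_Icc.2 (hθ.1.trans hθ.2))).trans ?_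
  rw [sub_zero, Real.norm_of_nonneg hθ.1]
  gcongr
  exact hθ.2

namespace IsStableChain

variable (h : IsStableChain E dE ρ f T τ n s ζ) (hE : IsUniformlyConvexPotential E dE d2E κ)
include h hE

theorem norm_sub_le (hf : LipschitzOnWith L f (Icc 0 T)) {i : ℕ} (hi : i + 1 < n) :
    ‖ζ (i + 2) - ζ (i + 1)‖ ≤ 2 * L / κ * (s (i + 1) - s i) := by
  have hκ := hE.modulus_pos
  calc ‖ζ (i + 2) - ζ (i + 1)‖ ≤ 2 / κ * ‖f (s (i + 1)) - f (s i)‖ :=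
        hE.norm_sub_le_of_isStable (h.isStable i (by omega)) (h.descent (i + 1) hi)
    _ ≤ 2 / κ * (L * (s (i + 1) - s i)) := by
        gcongr
        refine (hf.norm_sub_le (h.time_mem _) (h.time_mem _)).trans_eq ?_
        rw [Real.norm_of_nonneg (sub_nonneg.2 (h.time_lt i hi).le)]
    _ = 2 * L / κ * (s (i + 1) - s i) := by ring

theorem one_eq_zero (hn : 0 < n) (hstable : IsStable dE ρ (f 0) (ζ 0)) : ζ 1 = ζ 0 := by
  rw [← h.time_zero] at hstable
  simpa [sub_eq_zero] using hE.norm_sub_le_of_isStable hstable (h.descent 0 hn)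

theorem norm_sub_zero_le (hstable : IsStable dE ρ (f 0) (ζ 0))
    (hf : LipschitzOnWith L f (Icc 0 T)) {i : ℕ} (hi : i < n) :
    ‖ζ (i + 1) - ζ 0‖ ≤ 2 * L / κ * s i := by
  induction i with
  | zero => simp [h.one_eq_zero hE hi hstable, h.time_zero]
  | succ i ih =>
    calc ‖ζ (i + 2) - ζ 0‖ ≤ ‖ζ (i + 2) - ζ (i + 1)‖ + ‖ζ (i + 1) - ζ 0‖ :=
          norm_sub_le_norm_sub_add_norm_sub _ _ _
      _ ≤ 2 * L / κ * (s (i + 1) - s i) + 2 * L / κ * s i :=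
          add_le_add (h.norm_sub_le hE hf hi) (ih (by omega))
      _ = 2 * L / κ * s (i + 1) := by ring

variable (hρ : ∀ (c : ℝ) v, 0 ≤ c → ρ (c • v) = c * ρ v) (hf : LipschitzOnWith L f (Icc 0 T))
  (hy : IsLipschitzSolution dE ρ f T Λ y) {S : Set W} (hS : Convex ℝ S) {C M : ℝ≥0}
  (hC : LipschitzOnWith C d2E S) (hM : LipschitzOnWith M dE S) (hyS : MapsTo y (Icc 0 T) S)
  (hζS : ∀ i < n, ζ (i + 1) ∈ S)
include hρ hf hy hS hC hM hyS hζS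

theorem bregman_affineInterp_le_exp_mul {i : ℕ} (hi : i + 1 < n) {θ : ℝ}
    (hθ : θ ∈ Icc (s i) (s (i + 1))) :
    bregman E dE (affineInterp (s i) (s (i + 1)) (ζ (i + 1)) (ζ (i + 2)) θ) (y θ) ≤
      Real.exp (2 * C * Λ / κ * (θ - s i)) * (bregman E dE (ζ (i + 1)) (y (s i)) +
        (M * (2 * L / κ) + L) * (2 * L / κ + Λ) * τ * (θ - s i)) := by
  have hκ := hE.modulus_pos
  set σ := 2 * L / κ
  have hlt := h.time_lt i hi
  have hstep : s (i + 1) - s i ≤ τ := sub_le_iff_le_add'.2 (h.time_le i (by omega))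
  have hpos : 0 ≤ (M * σ + L) * (s (i + 1) - s i) := mul_nonneg (by positivity) (by linarith)
  have hsub : Icc (s i) (s (i + 1)) ⊆ Icc 0 T := Icc_subset_Icc (h.time_mem i).1 (h.time_mem _).2
  have hsubθ : Icc (s i) θ ⊆ Icc (s i) (s (i + 1)) := Icc_subset_Icc_right hθ.2
  obtain ⟨K, hK⟩ := exists_lipschitzWith_affineInterp (s i) (s (i + 1)) (ζ (i + 1)) (ζ (i + 2))
  have hflow := hE.isFlowOn_affineInterp hρ hS hM hlt (hf.mono hsub) (hζS i (by omega))
    (hζS (i + 1) hi) (h.norm_sub_le hE hf hi) (h.isStable (i + 1) hi) (h.descent (i + 1) hi)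
  have hcompare := hE.bregman_le_of_isFlowOn hS hC hθ.1
    (hy.lipschitzOnWith.mono (hsubθ.trans hsub)) hK.lipschitzOnWith
    (hyS.mono_left (hsubθ.trans hsub))
    (fun u hu ↦ hS.segment_subset (hζS i (by omega)) (hζS (i + 1) hi)
      (affineInterp_mem_segment (hsubθ hu) _ _))
    hpos (by positivity)
    (hy.isFlowOn.mono (Ioo_subset_Ioo (h.time_mem i).1 (hθ.2.trans (h.time_mem _).2)))
    (hflow.mono (Ioo_subset_Ioo_right hθ.2))
  rw [affineInterp_left] at hcompare
  refine hcompare.trans ?_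
  have hθ0 : 0 ≤ θ - s i := sub_nonneg.2 hθ.1
  gcongr
  calc (M * σ + L) * (s (i + 1) - s i) * σ + (M * σ + L) * (s (i + 1) - s i) * Λ
      = (M * σ + L) * (σ + Λ) * (s (i + 1) - s i) := by ring
    _ ≤ (M * σ + L) * (σ + Λ) * τ := by gcongr

theorem bregman_affineInterp_le_of_node {i : ℕ} (hi : i + 1 < n) {θ : ℝ}
    (hθ : θ ∈ Icc (s i) (s (i + 1)))
    (hnode : bregman E dE (ζ (i + 1)) (y (s i)) ≤ Real.exp (2 * C * Λ / κ * s i) *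
      ((M * (2 * L / κ) + L) * (2 * L / κ + Λ) * τ * s i)) :
    bregman E dE (affineInterp (s i) (s (i + 1)) (ζ (i + 1)) (ζ (i + 2)) θ) (y θ) ≤
      Real.exp (2 * C * Λ / κ * θ) * ((M * (2 * L / κ) + L) * (2 * L / κ + Λ) * τ * θ) := by
  have hκ := hE.modulus_pos
  have hτ : 0 ≤ τ := by linarith [h.time_lt i hi, h.time_le i (by omega)]
  have hs := (h.time_mem i).1
  have hinterp := h.bregman_affineInterp_le_exp_mul hE hρ hf hy hS hC hM hyS hζS hi hθ
  set c := 2 * C * Λ / κ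
  set η := (M * (2 * L / κ) + L) * (2 * L / κ + Λ) * τ
  have hη : 0 ≤ η * (θ - s i) := mul_nonneg (by positivity) (sub_nonneg.2 hθ.1)
  have hη_le := le_mul_of_one_le_left hη (Real.one_le_exp (x := c * s i) (by positivity))
  calc _ ≤ Real.exp (c * (θ - s i)) *
        (bregman E dE (ζ (i + 1)) (y (s i)) + η * (θ - s i)) := hinterp
    _ ≤ Real.exp (c * (θ - s i)) * (Real.exp (c * s i) * (η * s i) +
          Real.exp (c * s i) * (η * (θ - s i))) :=
        mul_le_mul_of_nonneg_left (add_le_add hnode hη_le) (Real.exp_nonneg _)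
    _ = Real.exp (c * (θ - s i)) * Real.exp (c * s i) * (η * θ) := by ring
    _ = Real.exp (c * θ) * (η * θ) := by rw [← Real.exp_add, ← mul_add, sub_add_cancel]

theorem bregman_node_le (h0 : ζ 0 = y 0) {i : ℕ} (hi : i < n) :
    bregman E dE (ζ (i + 1)) (y (s i)) ≤ Real.exp (2 * C * Λ / κ * s i) *
      ((M * (2 * L / κ) + L) * (2 * L / κ + Λ) * τ * s i) := by
  induction i with
  | zero => simp [h.time_zero, h.one_eq_zero hE hi (h0 ▸ hy.isStable_zero), h0, bregman_self]
  | succ i ih =>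
    have hlt := h.time_lt i hi
    have hend := h.bregman_affineInterp_le_of_node hE hρ hf hy hS hC hM hyS hζS hi
      (right_mem_Icc.2 hlt.le) (ih (by omega))
    rwa [affineInterp_right hlt.ne] at hend

end IsStableChain

theorem exists_bregman_le_mul_of_isStableChain (hE : IsUniformlyConvexPotential E dE d2E κ)
    (hρ : ∀ (c : ℝ) v, 0 ≤ c → ρ (c • v) = c * ρ v) (hT : 0 ≤ T)
    (hf : LipschitzOnWith L f (Icc 0 T)) (hy : IsLipschitzSolution dE ρ f T Λ y) :
    ∃ B, 0 ≤ B ∧ ∀ {τ : ℝ} {n : ℕ} {s : ℕ → ℝ} {ζ : ℕ → W}, 0 ≤ τ →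
      IsStableChain E dE ρ f T τ n s ζ → ζ 0 = y 0 →
      (∀ i < n, bregman E dE (ζ (i + 1)) (y (s i)) ≤ B * τ) ∧
      ∀ i, i + 1 < n → ∀ θ ∈ Icc (s i) (s (i + 1)),
        bregman E dE (affineInterp (s i) (s (i + 1)) (ζ (i + 1)) (ζ (i + 2)) θ) (y θ) ≤ B * τ := by
  have hκ := hE.modulus_pos
  set r := ‖y 0‖ + (2 * L / κ + Λ) * T
  obtain ⟨C, hC⟩ := hE.exists_lipschitzOnWith_hessian r
  obtain ⟨M, hM⟩ := hE.exists_lipschitzOnWith_deriv r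
  have hyS : MapsTo y (Icc 0 T) (closedBall 0 r) := fun θ hθ ↦ by
    have hσT : 0 ≤ 2 * L / κ * T := by positivity
    rw [mem_closedBall_zero_iff]
    linarith [norm_le_norm_add_norm_sub' (y θ) (y 0), hy.norm_sub_zero_le hθ]
  set η := (M * (2 * L / κ) + L) * (2 * L / κ + Λ)
  have hexp : ∀ {τ : ℝ}, 0 ≤ τ → ∀ θ ∈ Icc 0 T, Real.exp (2 * C * Λ / κ * θ) * (η * τ * θ) ≤
      Real.exp (2 * C * Λ / κ * T) * (η * T) * τ := fun {τ} hτ θ hθ ↦ by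
    obtain ⟨hθ0, hθT⟩ := hθ
    calc Real.exp (2 * C * Λ / κ * θ) * (η * τ * θ)
        ≤ Real.exp (2 * C * Λ / κ * T) * (η * τ * T) := by gcongr
      _ = Real.exp (2 * C * Λ / κ * T) * (η * T) * τ := by ring
  refine ⟨Real.exp (2 * C * Λ / κ * T) * (η * T), by positivity, fun {τ n s ζ} hτ h h0 ↦ ?_⟩
  have hζS : ∀ i < n, ζ (i + 1) ∈ closedBall 0 r := fun i hi ↦ by
    have hdist : ‖ζ (i + 1) - y 0‖ ≤ 2 * L / κ * T := h0 ▸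
      (h.norm_sub_zero_le hE (h0 ▸ hy.isStable_zero) hf hi).trans
        (by gcongr; exact (h.time_mem i).2)
    have hΛT : 0 ≤ Λ * T := by positivity
    rw [mem_closedBall_zero_iff]
    linarith [norm_le_norm_add_norm_sub' (ζ (i + 1)) (y 0)]
  have hnode := fun {i} hi ↦ h.bregman_node_le hE hρ hf hy (convex_closedBall 0 r) hC hM hyS hζS h0
    (i := i) hi
  refine ⟨fun i hi ↦ (hnode hi).trans (hexp hτ _ (h.time_mem i)), fun i hi θ hθ ↦ ?_⟩
  have hθ' : θ ∈ Icc 0 T := Icc_subset_Icc (h.time_mem i).1 (h.time_mem _).2 hθ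
  exact (h.bregman_affineInterp_le_of_node hE hρ hf hy (convex_closedBall 0 r) hC hM hyS hζS hi hθ
    (hnode (by omega))).trans (hexp hτ θ hθ')

end Chain

section Scheme

open Set Filter Topology

variable {W : Type*} [NormedAddCommGroup W] [NormedSpace ℝ W]

/-- A dissipation functional: subadditive and positively `1`-homogeneous. -/
structure IsSublinear (ρ : W → ℝ) : Prop where
  map_add_le : ∀ u v, ρ (u + v) ≤ ρ u + ρ v
  map_smul : ∀ (c : ℝ) v, 0 ≤ c → ρ (c • v) = c * ρ v

theorem IsSublinear.map_zero {ρ : W → ℝ} (hρ : IsSublinear ρ) : ρ 0 = 0 := by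
  simpa using hρ.map_smul 0 0 le_rfl

theorem isSublinear_of_convexOn {ρ : W → ℝ} (hρ : ConvexOn ℝ univ ρ)
    (hsmul : ∀ (c : ℝ) v, 0 ≤ c → ρ (c • v) = c * ρ v) : IsSublinear ρ where
  map_add_le u v := by
    have h := hρ.2 (mem_univ u) (mem_univ v) one_half_pos.le one_half_pos.le (add_halves 1)
    rw [← smul_add, hsmul _ _ one_half_pos.le] at h
    simp only [smul_eq_mul] at h
    linarith
  map_smul := hsmul

theorem IsSublinear.comp {G : Type*} [NormedAddCommGroup G] [NormedSpace ℝ G] {ρ : G → ℝ}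
    (hρ : IsSublinear ρ) (ι : W →L[ℝ] G) : IsSublinear fun w ↦ ρ (ι w) where
  map_add_le u v := by simpa using hρ.map_add_le (ι u) (ι v)
  map_smul c v hc := by simpa using hρ.map_smul c (ι v) hc

/-- The local incremental minimization scheme for the energy `I(t,z) = E(z) - f(t)(z)`; the
seminorm `p` measures the increments, i.e. it is the norm of `V` in the paper. -/
structure IsLocalMinScheme (E : W → ℝ) (ρ : W → ℝ) (f : ℝ → W →L[ℝ] ℝ) (p : Seminorm ℝ W)
    (T τ : ℝ) (t : ℕ → ℝ) (z : ℕ → W) : Prop where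
  time_zero : t 0 = 0
  minimal : ∀ k w, p (w - z k) ≤ τ →
    E (z (k + 1)) - f (t k) (z (k + 1)) + ρ (z (k + 1) - z k) ≤ E w - f (t k) w + ρ (w - z k)
  step_le : ∀ k, p (z (k + 1) - z k) ≤ τ
  time_succ : ∀ k, t (k + 1) = min (t k + τ - p (z (k + 1) - z k)) T

/-- The index set `𝒩(τ)` of the paper: the steps at which the time proceeds, together with the
first index `0` and the last index `m = N̂(τ)`. -/
def progressIndices (t : ℕ → ℝ) (N m : ℕ) : Set ℕ :=
  {k | k = 0 ∨ k = m ∨ (1 ≤ k ∧ k ≤ N ∧ t (k - 1) < t k)}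

/-- `K 0 < ⋯ < K n` is the increasing enumeration of `progressIndices t N m`. -/
structure IsProgressEnumeration (t : ℕ → ℝ) (N m n : ℕ) (K : ℕ → ℕ) : Prop where
  map_zero : K 0 = 0
  map_last : K n = m
  strictMonoOn : StrictMonoOn K (Iic n)
  image_eq : K '' Iic n = progressIndices t N m

variable {E : W → ℝ} {dE : W → W →L[ℝ] ℝ} {ρ : W → ℝ} {f : ℝ → W →L[ℝ] ℝ}

theorem isStable_of_eventually_le {q z₀ : W} {g : W →L[ℝ] ℝ} (hE : HasFDerivAt E (dE q) q)
    (hρ : IsSublinear ρ)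
    (hmin : ∀ v, ∀ᶠ ε in 𝓝[>] (0 : ℝ), E q - g q + ρ (q - z₀) ≤
      E (q + ε • v) - g (q + ε • v) + ρ (q + ε • v - z₀)) :
    IsStable dE ρ g q := by
  intro v
  set φ : ℝ → ℝ := fun ε ↦ E (q + ε • v) - g (q + ε • v) + ε * ρ v
  have hline : HasDerivAt (fun ε : ℝ ↦ q + ε • v) v 0 := by
    simpa using ((hasDerivAt_id (0 : ℝ)).smul_const v).const_add q
  have hφ : HasDerivAt φ (dE q v - g v + ρ v) 0 := by
    have hE' : HasFDerivAt E (dE q) (q + (0 : ℝ) • v) := by simpa using hE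
    exact (((hE'.comp_hasDerivAt 0 hline).sub (g.hasFDerivAt.comp_hasDerivAt 0 hline)).add
      ((hasDerivAt_id (0 : ℝ)).mul_const (ρ v))).congr_deriv (by simp)
  have hslope : Tendsto (slope φ 0) (𝓝[>] 0) (𝓝 (dE q v - g v + ρ v)) :=
    (hasDerivWithinAt_iff_tendsto_slope' (lt_irrefl _)).1 hφ.hasDerivWithinAt
  have hnonneg : 0 ≤ dE q v - g v + ρ v := by
    refine ge_of_tendsto hslope ?_
    filter_upwards [hmin v, self_mem_nhdsWithin] with ε hε hpos
    have hρε := hρ.map_add_le (q - z₀) (ε • v)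
    rw [hρ.map_smul ε v (le_of_lt hpos), sub_add_eq_add_sub] at hρε
    rw [slope_def_field]
    refine div_nonneg ?_ (by simpa using (le_of_lt hpos))
    simp only [φ, zero_smul, add_zero, zero_mul]
    linarith
  linarith

namespace IsLocalMinScheme

variable {p : Seminorm ℝ W} {T τ : ℝ} {t : ℕ → ℝ} {z : ℕ → W}

section Time

variable (h : IsLocalMinScheme E ρ f p T τ t z)
include h

theorem time_succ_le (k : ℕ) : t (k + 1) ≤ t k + τ - p (z (k + 1) - z k) :=
  h.time_succ k ▸ min_le_left _ _

theorem time_le (hT : 0 ≤ T) : ∀ k, t k ≤ T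
  | 0 => h.time_zero ▸ hT
  | k + 1 => h.time_succ k ▸ min_le_right _ _

theorem monotone_time (hT : 0 ≤ T) : Monotone t :=
  monotone_nat_of_le_succ fun k ↦ h.time_succ k ▸
    le_min (by linarith [h.step_le k]) (h.time_le hT k)

theorem time_mem (hT : 0 ≤ T) (k : ℕ) : t k ∈ Icc 0 T :=
  ⟨h.time_zero ▸ h.monotone_time hT k.zero_le, h.time_le hT k⟩

theorem time_eq_of_le (hT : 0 ≤ T) {N k : ℕ} (hN : t N = T) (hk : N ≤ k) : t k = T :=
  (h.time_le hT k).antisymm (hN ▸ h.monotone_time hT hk)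

end Time

variable (h : IsLocalMinScheme E ρ f p T τ t z) (hρ : IsSublinear ρ)
include h hρ

theorem isStable_of_time_lt (hE : ∀ w, HasFDerivAt E (dE w) w) {k : ℕ} (hk : t k < t (k + 1)) :
    IsStable dE ρ (f (t k)) (z (k + 1)) := by
  have hinterior : p (z (k + 1) - z k) < τ := by linarith [h.time_succ_le k]
  refine isStable_of_eventually_le (z₀ := z k) (hE _) hρ fun v ↦ ?_
  have hlim : Tendsto (fun ε : ℝ ↦ p (z (k + 1) - z k) + ‖ε‖ * p v) (𝓝[>] 0)
      (𝓝 (p (z (k + 1) - z k))) := by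
    refine tendsto_nhdsWithin_of_tendsto_nhds (Continuous.tendsto' (by fun_prop) _ _ (by simp))
  filter_upwards [hlim.eventually_lt_const hinterior] with ε hε
  refine h.minimal k _ (le_trans ?_ hε.le)
  rw [add_sub_right_comm, ← map_smul_eq_mul]
  exact map_add_le_add p _ _

theorem descent_of_time_eq (hτ : 0 ≤ τ) {i j : ℕ} (hij : i ≤ j)
    (ht : ∀ k, i ≤ k → k < j → t k = t i) :
    E (z j) - f (t i) (z j) + ρ (z j - z i) ≤ E (z i) - f (t i) (z i) := by
  induction j, hij using Nat.le_induction with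
  | base => simp [hρ.map_zero]
  | succ j hij ih =>
    have hprev := ih fun k hk hkj ↦ ht k hk (by omega)
    have hstep := h.minimal j (z j) (by simpa using hτ)
    rw [ht j hij j.lt_succ_self, sub_self, hρ.map_zero] at hstep
    have hsplit := hρ.map_add_le (z (j + 1) - z j) (z j - z i)
    rw [sub_add_sub_cancel] at hsplit
    linarith

end IsLocalMinScheme

namespace IsProgressEnumeration

variable {p : Seminorm ℝ W} {T τ : ℝ} {t : ℕ → ℝ} {z : ℕ → W} {N m n : ℕ} {K : ℕ → ℕ}

theorem lt_succ (hK : IsProgressEnumeration t N m n K) {j : ℕ} (hj : j < n) : K j < K (j + 1) :=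
  hK.strictMonoOn hj.le hj j.lt_succ_self

theorem notMem_progressIndices (hK : IsProgressEnumeration t N m n K) {j k : ℕ} (hj : j < n)
    (hjk : K j < k) (hkj : k < K (j + 1)) : k ∉ progressIndices t N m := by
  rw [← hK.image_eq]
  rintro ⟨i, hi, rfl⟩
  have hji := (hK.strictMonoOn.lt_iff_lt hj.le hi).1 hjk
  have hij := (hK.strictMonoOn.lt_iff_lt hi hj).1 hkj
  omega

variable (hK : IsProgressEnumeration t N m n K) (h : IsLocalMinScheme E ρ f p T τ t z)
  (hT : 0 ≤ T) (hN : t N = T)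
include hK h hT hN

theorem time_eq {j k : ℕ} (hj : j < n) (hjk : K j ≤ k) (hkj : k < K (j + 1)) :
    t k = t (K j) := by
  induction k, hjk using Nat.le_induction with
  | base => rfl
  | succ k hjk ih =>
    rw [← ih (by omega)]
    by_contra hne
    have hlt : t k < t (k + 1) := lt_of_le_of_ne (h.monotone_time hT k.le_succ) (Ne.symm hne)
    have hkN : k < N := by
      by_contra! hNk
      exact absurd (h.time_le hT (k + 1)) (not_le.2 (h.time_eq_of_le hT hN hNk ▸ hlt))
    exact hK.notMem_progressIndices hj (by omega) hkj (.inr (.inr ⟨by omega, hkN, hlt⟩))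

theorem exists_eq_succ {j : ℕ} (hj : j < n) : ∃ k, K (j + 1) = k + 1 ∧ t k = t (K j) := by
  have hlt := hK.lt_succ hj
  obtain ⟨k, hk⟩ := Nat.exists_eq_succ_of_ne_zero (Nat.ne_zero_of_lt hlt)
  exact ⟨k, hk, hK.time_eq h hT hN hj (by omega) (by omega)⟩

theorem eq_last_or_time_lt {j : ℕ} (hj : j < n) :
    K (j + 1) = m ∨ t (K j) < t (K (j + 1)) := by
  have hmem : K (j + 1) ∈ progressIndices t N m := hK.image_eq ▸ mem_image_of_mem K hj
  obtain ⟨k, hk, hkt⟩ := hK.exists_eq_succ h hT hN hj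
  rcases hmem with h0 | hm | ⟨-, -, hlt⟩
  · omega
  · exact .inl hm
  · rw [hk] at hlt ⊢
    exact .inr (hkt ▸ hlt)

theorem isStableChain (hE : ∀ w, HasFDerivAt E (dE w) w) (hρ : IsSublinear ρ) (hτ : 0 ≤ τ)
    (hstable : IsStable dE ρ (f (t (m - 1))) (z m)) :
    IsStableChain E dE ρ f T τ n (fun j ↦ t (K j)) (fun j ↦ z (K j)) where
  time_zero := by simp only [hK.map_zero, h.time_zero]
  time_mem j := h.time_mem hT _
  time_lt j hj := by
    have hne : K (j + 1) ≠ m := hK.map_last ▸ (hK.strictMonoOn hj.le (mem_Iic.2 le_rfl) hj).ne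
    exact (hK.eq_last_or_time_lt h hT hN (by omega)).resolve_left hne
  time_le j hj := by
    obtain ⟨k, hk, hkt⟩ := hK.exists_eq_succ h hT hN hj
    simp only [hk, ← hkt]
    linarith [h.time_succ_le k, apply_nonneg p (z (k + 1) - z k)]
  isStable j hj := by
    obtain ⟨k, hk, hkt⟩ := hK.exists_eq_succ h hT hN hj
    simp only [hk, ← hkt]
    rcases hK.eq_last_or_time_lt h hT hN hj with hm | hlt
    · rw [← hm, hk] at hstable
      exact hstable
    · exact h.isStable_of_time_lt hρ hE (by rwa [← hkt, hk] at hlt)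
  descent j hj := h.descent_of_time_eq hρ hτ (hK.lt_succ hj).le
    fun k hjk hkj ↦ hK.time_eq h hT hN hj hjk hkj

end IsProgressEnumeration

end Scheme

section ErrorEstimate

open Set

variable {W : Type*} [NormedAddCommGroup W] [NormedSpace ℝ W] {E : W → ℝ} {dE : W → W →L[ℝ] ℝ}
  {d2E : W → W →L[ℝ] W →L[ℝ] ℝ} {κ : ℝ} {ρ : W → ℝ} {f : ℝ → W →L[ℝ] ℝ} {T : ℝ} {L Λ : ℝ≥0}
  {y : ℝ → W}

theorem IsUniformlyConvexPotential.norm_sub_le_sqrt_mul_sqrt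
    (hE : IsUniformlyConvexPotential E dE d2E κ) {B τ : ℝ} (hB : 0 ≤ B) {x z : W}
    (hxz : bregman E dE z x ≤ B * τ) : ‖x - z‖ ≤ √(2 / κ * B) * √τ := by
  have hκ := hE.modulus_pos
  rw [norm_sub_rev, ← Real.sqrt_mul (by positivity)]
  refine Real.le_sqrt_of_sq_le ((hE.norm_sub_sq_le z x).trans ?_)
  rw [mul_assoc]
  gcongr

theorem IsLipschitzSolution.norm_sub_le_mul_sqrt (hy : IsLipschitzSolution dE ρ f T Λ y) {a τ : ℝ}
    (ha : a ∈ Icc 0 T) (haτ : T ≤ a + τ) : ‖y T - y a‖ ≤ Λ * √T * √τ := by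
  have hT : 0 ≤ T := ha.1.trans ha.2
  have hsqrt : T - a ≤ √T * √τ := by
    rw [← Real.sqrt_mul hT]
    refine Real.le_sqrt_of_sq_le ?_
    rw [sq]
    exact mul_le_mul (by linarith [ha.1]) (by linarith) (by linarith [ha.2]) hT
  calc ‖y T - y a‖ ≤ Λ * (T - a) := by
        simpa only [Real.norm_of_nonneg (sub_nonneg.2 ha.2)] using
          hy.lipschitzOnWith.norm_sub_le (right_mem_Icc.2 hT) ha
    _ ≤ Λ * √T * √τ := by rw [mul_assoc]; gcongr

theorem statement12_general (hE : IsUniformlyConvexPotential E dE d2E κ) (hρ : IsSublinear ρ)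
    (hT : 0 < T) (hf : LipschitzOnWith L f (Icc 0 T)) (hy : IsLipschitzSolution dE ρ f T Λ y) :
    ∃ C, 0 < C ∧ ∀ {p : Seminorm ℝ W} {τ : ℝ} {t : ℕ → ℝ} {z : ℕ → W} {N m n : ℕ} {K : ℕ → ℕ},
      0 < τ → IsLocalMinScheme E ρ f p T τ t z → z 0 = y 0 → t N = T → N ≤ m →
      IsStable dE ρ (f (t (m - 1))) (z m) → IsProgressEnumeration t N m n K →
      (∀ j, 1 ≤ j → j + 1 ≤ n → ∀ s ∈ Ico (t (K (j - 1))) (t (K j)),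
        ‖y s - affineInterp (t (K (j - 1))) (t (K j)) (z (K j)) (z (K (j + 1))) s‖ ≤ C * √τ) ∧
      ‖y T - z m‖ ≤ C * √τ := by
  obtain ⟨B, hB, hbregman⟩ := exists_bregman_le_mul_of_isStableChain hE hρ.map_smul hT.le hf hy
  set C₀ := √(2 / κ * B)
  have : 0 ≤ C₀ := Real.sqrt_nonneg _
  refine ⟨C₀ + Λ * √T + 1, by positivity, ?_⟩
  intro p τ t z N m n K hτ h h0 hN hNm hstable hK
  have hchain := hK.isStableChain h hT.le hN hE.hasFDerivAt hρ hτ.le hstable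
  obtain ⟨hnode, hinterp⟩ := hbregman hτ.le hchain (by rwa [hK.map_zero])
  have hC_le : ∀ c, c ≤ C₀ + Λ * √T → c * √τ ≤ (C₀ + Λ * √T + 1) * √τ := fun c hc ↦ by
    gcongr
    linarith
  constructor
  · rintro (_ | i) hi hin s hs
    · omega
    · refine (hE.norm_sub_le_sqrt_mul_sqrt hB (hinterp i hin s (Ico_subset_Icc_self hs))).trans
        (hC_le _ (le_add_of_nonneg_right (by positivity)))
  · have htm : t m = T := h.time_eq_of_le hT.le hN hNm
    have hn : n ≠ 0 := by
      rintro rfl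
      have hm : m = 0 := hK.map_last.symm.trans hK.map_zero
      exact hT.ne (h.time_zero.symm.trans (hm ▸ htm))
    obtain ⟨i, rfl⟩ := Nat.exists_eq_succ_of_ne_zero hn
    have hlast := hE.norm_sub_le_sqrt_mul_sqrt hB (hnode i i.lt_succ_self)
    have htail := hy.norm_sub_le_mul_sqrt (hchain.time_mem i)
      (by simpa only [hK.map_last, htm] using hchain.time_le i i.lt_succ_self)
    rw [hK.map_last] at hlast
    calc ‖y T - z m‖ ≤ ‖y T - y (t (K i))‖ + ‖y (t (K i)) - z m‖ :=
          norm_sub_le_norm_sub_add_norm_sub _ _ _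
      _ ≤ (C₀ + Λ * √T) * √τ := by linarith
      _ ≤ _ := hC_le _ le_rfl

end ErrorEstimate

section SemilinearEnergy

open Set Metric

variable {H U : Type*} [NormedAddCommGroup H] [InnerProductSpace ℝ H]
  [NormedAddCommGroup U] [InnerProductSpace ℝ U]

theorem IsSublinear.isApproxSubgradient_comp {R : U → ℝ} (hR : IsSublinear R) {ι : H →L[ℝ] U}
    {v : H} {ξ : U →L[ℝ] ℝ} (hξ : ξ ∈ subdiff R (ι v)) :
    IsApproxSubgradient (fun w ↦ R (ι w)) (ξ.comp ι) v 0 0 where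
  apply_le w := by
    have h := hξ (ι v + ι w)
    rw [add_sub_cancel_left] at h
    simp only [ContinuousLinearMap.comp_apply]
    linarith [hR.map_add_le (ι v) (ι w)]
  le_apply := by
    have h := hξ 0
    rw [hR.map_zero, zero_sub, map_neg] at h
    simp only [ContinuousLinearMap.comp_apply]
    linarith

variable {A : H →L[ℝ] H →L[ℝ] ℝ} {F : H → ℝ} {DF : H → U →L[ℝ] ℝ} {D2F : H → H →L[ℝ] U →L[ℝ] ℝ}
  {R : U → ℝ} {ℓ : ℝ → U →L[ℝ] ℝ} {ι : H →L[ℝ] U} {κ T : ℝ}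

theorem UniformlyConvex.isUniformlyConvexPotential (hconv : UniformlyConvex A D2F ι κ)
    (hA : ∀ z w, A z w = A w z) (hF : ∀ w, HasFDerivAt F ((DF w).comp ι) w)
    (hDF : ∀ w, HasFDerivAt DF (D2F w) w)
    (hD2F : ∀ r : ℝ, 0 < r → ∃ C : ℝ, 0 ≤ C ∧ ∀ z₁ z₂ v, ‖z₁‖ ≤ r → ‖z₂‖ ≤ r →
      D2F z₁ v (ι v) - D2F z₂ v (ι v) ≤ C * ‖z₁ - z₂‖ * ‖v‖ ^ 2) :
    IsUniformlyConvexPotential (fun w ↦ (1 / 2 : ℝ) * A w w + F w) (fun w ↦ A w + (DF w).comp ι)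
      (fun w ↦ A + (ι.precomp ℝ).comp (D2F w)) κ := by
  have hE : ∀ w, HasFDerivAt (fun w ↦ (1 / 2 : ℝ) * A w w + F w) (A w + (DF w).comp ι) w :=
    fun w ↦ (hasFDerivAt_half_mul_apply_self hA w).add (hF w)
  have hdE : ∀ w, HasFDerivAt (fun w ↦ A w + (DF w).comp ι) (A + (ι.precomp ℝ).comp (D2F w)) w :=
    fun w ↦ A.hasFDerivAt.add
      (HasFDerivAt.comp (g := ι.precomp ℝ) w (ι.precomp ℝ).hasFDerivAt (hDF w))
  refine ⟨hconv.1, hE, hdE, fun w v ↦ by simpa using hconv.2 w v, fun r ↦ ?_⟩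
  obtain ⟨C, hC, hlip⟩ := hD2F (max r 1) (lt_max_of_lt_right one_pos)
  lift C to ℝ≥0 using hC
  have hLipschitz := lipschitzOnWith_of_apply_self_sub_le (C := C)
    (S := closedBall 0 (max r 1)) (fun w ↦ second_derivative_symmetric hE (hdE w))
    fun z₁ hz₁ z₂ hz₂ v ↦ by
      simpa using hlip z₁ z₂ v (mem_closedBall_zero_iff.1 hz₁) (mem_closedBall_zero_iff.1 hz₂)
  exact ⟨_, hLipschitz.mono (closedBall_subset_closedBall (le_max_left r 1))⟩

theorem LocStable.isStable (hR : IsSublinear R) {s : ℝ} {w : H} (h : LocStable R A DF ℓ ι s w) :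
    IsStable (fun w ↦ A w + (DF w).comp ι) (fun v ↦ R (ι v)) ((ℓ s).comp ι) w := by
  obtain ⟨ξ, hξ, hsum⟩ := h
  rw [← map_zero ι] at hξ
  intro v
  have hle := (hR.isApproxSubgradient_comp hξ).apply_le v
  rw [eq_neg_of_add_eq_zero_left hsum, DI, neg_sub] at hle
  simp only [_root_.sub_apply] at hle
  linarith

theorem IsDiffSol.isFlowOn [CompleteSpace H] (hR : IsSublinear R) {z₀ : H} {y : ℝ → H}
    (hy : IsDiffSol A DF ℓ R ι T z₀ y) :
    IsFlowOn (fun w ↦ A w + (DF w).comp ι) (fun v ↦ R (ι v)) (fun s ↦ (ℓ s).comp ι) 0 0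
      (Ioo 0 T) y := by
  obtain ⟨-, y', hy', hint, hsub⟩ := hy
  rw [ae_restrict_iff' measurableSet_Ioo] at hsub
  filter_upwards [hsub, hy'.ae_hasDerivAt_integral] with s hs hderiv hsT
  have hT : 0 ≤ T := (hsT.1.trans hsT.2).le
  refine ⟨y' s, ?_, ?_⟩
  · have hs_mem : s ∈ uIcc 0 T := uIcc_of_le hT ▸ Ioo_subset_Icc_self hsT
    refine ((hderiv hs_mem 0 left_mem_uIcc).const_add z₀).congr_of_eventuallyEq ?_
    filter_upwards [Icc_mem_nhds hsT.1 hsT.2] with u hu using hint u hu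
  · obtain ⟨ξ, hξ, hsum⟩ := hs hsT
    have h := hR.isApproxSubgradient_comp hξ
    rwa [eq_neg_of_add_eq_zero_left hsum, DI, neg_sub] at h

theorem IsDiffSol.isLipschitzSolution [CompleteSpace H] (hR : IsSublinear R) {z₀ : H} {y : ℝ → H}
    (hy : IsDiffSol A DF ℓ R ι T z₀ y) {Λ : ℝ≥0} (hLip : LipschitzOnWith Λ y (Icc 0 T))
    (hz₀ : LocStable R A DF ℓ ι 0 z₀) :
    IsLipschitzSolution (fun w ↦ A w + (DF w).comp ι) (fun v ↦ R (ι v)) (fun s ↦ (ℓ s).comp ι) T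
      Λ y :=
  ⟨hLip, hy.isFlowOn hR, hy.1 ▸ hz₀.isStable hR⟩

theorem Scheme.isLocalMinScheme {τ : ℝ} {z₀ : H} {t : ℕ → ℝ} {z : ℕ → H}
    (h : Scheme A F R ℓ ι T τ z₀ t z) :
    IsLocalMinScheme (fun w ↦ (1 / 2 : ℝ) * A w w + F w) (fun v ↦ R (ι v))
      (fun s ↦ (ℓ s).comp ι) ((normSeminorm ℝ U).comp ι.toLinearMap) T τ t z where
  time_zero := h.1
  minimal k := (h.2.2 k).2.1
  step_le k := (h.2.2 k).1
  time_succ k := (h.2.2 k).2.2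

end SemilinearEnergy

/-- Theorem 3.17: assume the energy is `κ`-uniformly convex
(no smallness assumption on `|ℓ|_Lip`). Then there is `C > 0`, independent of `τ`,
such that the interpolants `z̃_τ`, built on the iterates at which the time update
proceeds (enumerated by `𝔎`), satisfy `‖y(s) − z̃_τ(s)‖_Z ≤ C √τ` for all
`s ∈ [0,T]`, where `y ∈ C^{0,1}([0,T];Z)` is the unique differential solution. -/
theorem statement12
    (ι : Z →L[ℝ] V) (ιX : V →L[ℝ] X)
    (A : Z →L[ℝ] Z →L[ℝ] ℝ) (α : ℝ) (F : Z → ℝ) (DF : Z → V →L[ℝ] ℝ)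
    (D2F : Z → Z →L[ℝ] V →L[ℝ] ℝ) (R : V → ℝ) (ℓ : ℝ → V →L[ℝ] ℝ) (L T : ℝ)
    (hstand : StandingAssumptions ι ιX A α F DF D2F R ℓ L T)
    (hC21 : ∀ r : ℝ, 0 < r → ∃ Cr : ℝ, 0 ≤ Cr ∧ ∀ z₁ z₂ v : Z,
      ‖z₁‖ ≤ r → ‖z₂‖ ≤ r →
      D2F z₁ v (ι v) - D2F z₂ v (ι v) ≤ Cr * ‖z₁ - z₂‖ * ‖v‖ ^ 2)
    (κ : ℝ) (hconv : UniformlyConvex A D2F ι κ)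
    (z₀ : Z) (hz₀ : LocStable R A DF ℓ ι 0 z₀)
    -- the unique differential solution `y ∈ C^{0,1}([0,T];Z)`:
    (y : ℝ → Z) (hy : IsDiffSol A DF ℓ R ι T z₀ y)
    (hyLip : ∃ Ly : ℝ≥0, LipschitzOnWith Ly y (Set.Icc (0 : ℝ) T))
    (t : ℝ → ℕ → ℝ) (z : ℝ → ℕ → Z)
    (hscheme : ∀ τ : ℝ, 0 < τ → Scheme A F R ℓ ι T τ z₀ (t τ) (z τ))
    (N : ℝ → ℕ)
    (hN : ∀ τ : ℝ, 0 < τ → t τ (N τ) = T ∧ ∀ j : ℕ, j < N τ → t τ j < T)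
    (Nhat : ℝ → ℕ)
    (hNhat : ∀ τ : ℝ, 0 < τ → N τ ≤ Nhat τ ∧ 1 ≤ Nhat τ ∧
      LocStable R A DF ℓ ι (t τ (Nhat τ - 1)) (z τ (Nhat τ)))
    (n : ℝ → ℕ) (K : ℝ → ℕ → ℕ)
    (hK0 : ∀ τ : ℝ, 0 < τ → K τ 0 = 0)
    (hKlast : ∀ τ : ℝ, 0 < τ → K τ (n τ) = Nhat τ)
    (hKmono : ∀ τ : ℝ, 0 < τ → StrictMonoOn (K τ) (Set.Iic (n τ)))
    (hKmem : ∀ τ : ℝ, 0 < τ → ∀ j : ℕ, j ≤ n τ →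
      K τ j = 0 ∨ K τ j = Nhat τ ∨
        (1 ≤ K τ j ∧ K τ j ≤ N τ ∧ t τ (K τ j - 1) < t τ (K τ j)))
    (hKsurj : ∀ τ : ℝ, 0 < τ → ∀ k : ℕ,
      (k = 0 ∨ k = Nhat τ ∨ (1 ≤ k ∧ k ≤ N τ ∧ t τ (k - 1) < t τ k)) →
      ∃ j : ℕ, j ≤ n τ ∧ K τ j = k) :
    ∃ C : ℝ, 0 < C ∧ ∀ τ : ℝ, 0 < τ →
      (∀ j : ℕ, 1 ≤ j → j + 1 ≤ n τ →
        ∀ s ∈ Set.Ico (t τ (K τ (j - 1))) (t τ (K τ j)),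
          ‖y s - (z τ (K τ j) + ((s - t τ (K τ (j - 1))) /
              (t τ (K τ j) - t τ (K τ (j - 1)))) •
              (z τ (K τ (j + 1)) - z τ (K τ j)))‖ ≤ C * Real.sqrt τ) ∧
      ‖y T - z τ (Nhat τ)‖ ≤ C * Real.sqrt τ := by
  obtain ⟨-, -, -, -, hA, -, -, -, hF, hDF, -, -, hℓ, hT, hRconv, -, -, hRsmul, -⟩ := hstand
  obtain ⟨Λ, hΛ⟩ := hyLip
  have hR : IsSublinear R := isSublinear_of_convexOn hRconv hRsmul
  have hE := hconv.isUniformlyConvexPotential hA hF hDF hC21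
  have hload := (ι.precomp ℝ).lipschitz.comp_lipschitzOnWith hℓ
  obtain ⟨C, hC, herror⟩ := statement12_general hE (hR.comp ι) hT hload
    (hy.isLipschitzSolution hR hΛ hz₀)
  refine ⟨C, hC, fun τ hτ ↦ ?_⟩
  have henum : IsProgressEnumeration (t τ) (N τ) (Nhat τ) (n τ) (K τ) :=
    ⟨hK0 τ hτ, hKlast τ hτ, hKmono τ hτ,
      Set.Subset.antisymm (Set.image_subset_iff.2 (hKmem τ hτ)) (hKsurj τ hτ)⟩
  simpa only [affineInterp_apply] using herror hτ (hscheme τ hτ).isLocalMinScheme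
    ((hscheme τ hτ).2.1.trans hy.1.symm) (hN τ hτ).1 (hNhat τ hτ).1
    ((hNhat τ hτ).2.2.isStable hR) henum

end RIS
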